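/- arXiv:1903.04773 — 4 statements merged into one kernel-verified Lean document; each statement's English description precedes it below -/
import Mathlib

section
/- Let n ≥ 2 and 1 ≤ s ≤ n/2 be integers and K a field. If δ : M_n(K) → M_n(K) satisfies δ(xy) = δ(x)y + xδ(y) for all x, y of rank exactly s, then δ(xy) = δ(x)y + xδ(y) holds for all x of rank exactly 1 and all y of rank exactly s. -/
open Matrix

section LinearMaps

open Module LinearMap

variable {K V : Type*} [Field K] [AddCommGroup V] [Module K V] [FiniteDimensional K V]

/-- Between two nested subspaces there is one of every intermediate dimension. -/
theorem Submodule.exists_between_finrank_eq {P Q : Submodule K V} (hPQ : P ≤ Q) {k : ℕ}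
    (hPk : finrank K P ≤ k) (hkQ : k ≤ finrank K Q) :
    ∃ W : Submodule K V, P ≤ W ∧ W ≤ Q ∧ finrank K W = k := by
  induction k, hPk using Nat.le_induction with
  | base => exact ⟨P, le_rfl, hPQ, rfl⟩
  | succ k _ ih =>
    obtain ⟨W, hPW, hWQ, hW⟩ := ih (by omega)
    have hlt : W < Q := lt_of_le_of_ne hWQ (by rintro rfl; omega)
    obtain ⟨v, hvQ, hvW⟩ := SetLike.exists_of_lt hlt
    have hv : v ≠ 0 := by rintro rfl; exact hvW W.zero_mem
    have hdisj : W ⊓ K ∙ v = ⊥ := by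
      rw [← disjoint_iff, Submodule.disjoint_span_singleton' hv]
      exact hvW
    refine ⟨W ⊔ K ∙ v, hPW.trans le_sup_left, sup_le hWQ ?_, ?_⟩
    · rwa [Submodule.span_singleton_le_iff_mem]
    · have h := Submodule.finrank_sup_add_finrank_inf_eq W (K ∙ v)
      rw [hdisj, finrank_bot, finrank_span_singleton hv, hW] at h
      omega

/-- There is an endomorphism with prescribed kernel and range of complementary dimensions. -/
theorem Module.End.exists_ker_range_eq (P Q : Submodule K V)
    (h : finrank K P + finrank K Q = finrank K V) :
    ∃ f : End K V, ker f = P ∧ range f = Q := by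
  have hq := Submodule.finrank_quotient_add_finrank P
  have e : (V ⧸ P) ≃ₗ[K] Q := LinearEquiv.ofFinrankEq _ _ (by omega)
  refine ⟨Q.subtype ∘ₗ e.toLinearMap ∘ₗ P.mkQ, ?_, ?_⟩
  · rw [ker_comp_of_ker_eq_bot _ Q.ker_subtype, ker_comp_of_ker_eq_bot _ e.ker, Submodule.ker_mkQ]
  · rw [range_comp, range_comp, Submodule.range_mkQ, Submodule.map_top, e.range,
      Submodule.map_top, Submodule.range_subtype]

/-- A rank one endomorphism `x` factors as a product of two endomorphisms of rank `s`, the second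
one having any prescribed kernel of the right dimension contained in the kernel of `x`. -/
theorem Module.End.exists_mul_eq_of_le_ker {s : ℕ} (hs1 : 1 ≤ s) (hs2 : 2 * s ≤ finrank K V)
    {x : End K V} (hx : finrank K (range x) = 1) {W : Submodule K V} (hW : W ≤ ker x)
    (hWs : finrank K W + s = finrank K V) :
    ∃ a b : End K V, a * b = x ∧ finrank K (range a) = s ∧ finrank K (range b) = s ∧
      ker b = W := by
  obtain ⟨C, hWC⟩ := exists_isCompl W
  have hC := Submodule.finrank_add_eq_of_isCompl hWC
  let b : End K V := C.projection W hWC.symm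
  have hkerb : ker b = W := Submodule.ker_projection hWC.symm
  have hrangeb : range b = C := Submodule.range_projection hWC.symm
  have hmem (v : V) : v - b v ∈ W := by
    rw [← hkerb, mem_ker, map_sub, sub_eq_zero]
    exact (Submodule.projection_apply_of_mem_left hWC.symm
      (Submodule.projection_apply_mem hWC.symm v)).symm
  have hxb (v : V) : x (b v) = x v := by
    have := hW (hmem v)
    rw [mem_ker, map_sub, sub_eq_zero] at this
    exact this.symm
  obtain ⟨R, hR⟩ := exists_isCompl (range x)
  have hRdim := Submodule.finrank_add_eq_of_isCompl hR
  obtain ⟨Q, -, hQR, hQ⟩ := Submodule.exists_between_finrank_eq (bot_le : ⊥ ≤ R) (k := s - 1)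
    (by simp) (by omega)
  obtain ⟨P, hCP, -, hP⟩ := Submodule.exists_between_finrank_eq (le_top : C ≤ ⊤)
    (k := finrank K V - (s - 1)) (by omega) (by rw [finrank_top]; omega)
  obtain ⟨c, hkerc, hrangec⟩ := Module.End.exists_ker_range_eq P Q (by omega)
  have hcb (v : V) : c (b v) = 0 := by
    rw [← mem_ker, hkerc]
    exact hCP (hrangeb ▸ mem_range_self b v)
  refine ⟨x + c, b, ?_, ?_, by rw [hrangeb]; omega, hkerb⟩
  · ext v
    simp [hxb, hcb]
  · have hrange : range (x + c) = range x ⊔ Q := by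
      apply le_antisymm
      · rintro _ ⟨v, rfl⟩
        exact Submodule.add_mem_sup (mem_range_self x v) (hrangec ▸ mem_range_self c v)
      · rw [← hrangec]
        refine sup_le ?_ ?_
        · rintro _ ⟨v, rfl⟩
          exact ⟨b v, by simp [hxb, hcb]⟩
        · rintro _ ⟨v, rfl⟩
          exact ⟨v - b v, by simp [hxb, hcb]⟩
    have hdisj : range x ⊓ Q = ⊥ := (hR.disjoint.mono_right hQR).eq_bot
    have h := Submodule.finrank_sup_add_finrank_inf_eq (range x) Q
    rw [hdisj, finrank_bot, ← hrange, hx, hQ] at h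
    omega

variable {s : ℕ} {D : End K V → End K V}

/-- A map satisfying the Leibniz rule on endomorphisms of rank `s` vanishes at zero. -/
theorem Module.End.map_zero_of_leibniz_of_finrank_range_eq (hs1 : 1 ≤ s)
    (hs2 : 2 * s ≤ finrank K V)
    (hD : ∀ x y : End K V, finrank K (range x) = s → finrank K (range y) = s →
      D (x * y) = D x * y + x * D y) : D 0 = 0 := by
  ext v
  by_contra hv
  rw [LinearMap.zero_apply] at hv
  have hv0 : v ≠ 0 := by rintro rfl; exact hv (map_zero _)
  obtain ⟨R, hR⟩ := exists_isCompl (K ∙ D 0 v)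
  have hRdim := Submodule.finrank_add_eq_of_isCompl hR
  rw [finrank_span_singleton hv] at hRdim
  obtain ⟨S, -, hSR, hS⟩ := Submodule.exists_between_finrank_eq (bot_le : ⊥ ≤ R) (k := s)
    (by simp) (by omega)
  obtain ⟨P, hvP, -, hP⟩ := Submodule.exists_between_finrank_eq (le_top : K ∙ v ≤ ⊤)
    (k := finrank K V - s) (by rw [finrank_span_singleton hv0]; omega)
    (by rw [finrank_top]; omega)
  obtain ⟨N, hSN, -, hN⟩ := Submodule.exists_between_finrank_eq (le_top : S ≤ ⊤)
    (k := finrank K V - s) (by omega) (by rw [finrank_top]; omega)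
  obtain ⟨x, hkerx, hrangex⟩ := Module.End.exists_ker_range_eq N S (by omega)
  obtain ⟨y, hkery, hrangey⟩ := Module.End.exists_ker_range_eq P S (by omega)
  have hxy : x * y = 0 := by
    ext w
    rw [Module.End.mul_apply, LinearMap.zero_apply, ← mem_ker, hkerx]
    exact hSN (hrangey ▸ mem_range_self y w)
  have hyv : y v = 0 := by
    rw [← mem_ker, hkery]
    exact hvP (Submodule.mem_span_singleton_self v)
  have h := congrArg (fun f : End K V => f v) (hD x y (by rw [hrangex, hS]) (by rw [hrangey, hS]))
  simp only [hxy, LinearMap.add_apply, Module.End.mul_apply, hyv, map_zero, zero_add] at h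
  have hmem : D 0 v ∈ R := hSR (by rw [h, ← hrangex]; exact mem_range_self x _)
  exact hv (Submodule.disjoint_def.mp hR.disjoint _ (Submodule.mem_span_singleton_self _) hmem)

/-- The Leibniz rule on endomorphisms of rank `s` extends to products of a rank one endomorphism
with an endomorphism of rank `s`. -/
theorem Module.End.leibniz_of_finrank_range_eq_one (hs1 : 1 ≤ s) (hs2 : 2 * s ≤ finrank K V)
    (hD : ∀ x y : End K V, finrank K (range x) = s → finrank K (range y) = s →
      D (x * y) = D x * y + x * D y)
    {x y : End K V} (hx : finrank K (range x) = 1) (hy : finrank K (range y) = s) :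
    D (x * y) = D x * y + x * D y := by
  have hkerx := finrank_range_add_finrank_ker x
  by_cases hle : range y ≤ ker x
  · obtain ⟨W, hyW, hWx, hW⟩ := Submodule.exists_between_finrank_eq hle
      (k := finrank K V - s) (by omega) (by omega)
    obtain ⟨a, b, rfl, ha, hb, hkerb⟩ :=
      Module.End.exists_mul_eq_of_le_ker hs1 hs2 hx hWx (by omega)
    have hby : b * y = 0 := by
      ext w
      rw [Module.End.mul_apply, LinearMap.zero_apply, ← mem_ker, hkerb]
      exact hyW (mem_range_self y w)
    have h0 := Module.End.map_zero_of_leibniz_of_finrank_range_eq hs1 hs2 hD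
    have h := hD b y hb hy
    rw [hby, h0] at h
    rw [mul_assoc a b y, hby, mul_zero, h0, hD a b ha hb, add_mul, mul_assoc (D a), hby, mul_zero,
      zero_add, mul_assoc, mul_assoc, ← mul_add, ← h, mul_zero]
  · obtain ⟨C, hC⟩ := exists_isCompl (range y ⊓ ker x)
    have hCdim := Submodule.finrank_add_eq_of_isCompl hC
    have hsup := Submodule.finrank_sup_add_finrank_inf_eq (range y) (ker x)
    have hlt : finrank K (ker x) < finrank K ↥(range y ⊔ ker x) :=
      Submodule.finrank_lt_finrank_of_lt (right_lt_sup.mpr hle)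
    have hsuple := Submodule.finrank_le (range y ⊔ ker x)
    have hmod : (range y ⊓ ker x) ⊔ C ⊓ ker x = ker x := by
      rw [← sup_inf_assoc_of_le C inf_le_right, hC.sup_eq_top, top_inf_eq]
    have hdisj : (range y ⊓ ker x) ⊓ (C ⊓ ker x) = ⊥ :=
      (hC.disjoint.mono_right inf_le_left).eq_bot
    have hdim := Submodule.finrank_sup_add_finrank_inf_eq (range y ⊓ ker x) (C ⊓ ker x)
    rw [hmod, hdisj, finrank_bot] at hdim
    obtain ⟨a, b, rfl, ha, hb, hkerb⟩ := Module.End.exists_mul_eq_of_le_ker hs1 hs2 hx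
      (inf_le_right : C ⊓ ker x ≤ ker x) (by omega)
    have hker : ker (b * y) = ker y := by
      apply le_antisymm
      · intro w hw
        rw [mem_ker, Module.End.mul_apply, ← mem_ker, hkerb] at hw
        exact Submodule.disjoint_def.mp hC.disjoint _ ⟨mem_range_self y w, hw.2⟩ hw.1
      · exact ker_le_ker_comp y b
    have hby : finrank K (range (b * y)) = s := by
      have h₁ := finrank_range_add_finrank_ker (b * y)
      have h₂ := finrank_range_add_finrank_ker y
      rw [hker] at h₁
      omega
    rw [mul_assoc, hD a _ ha hby, hD b y hb hy, hD a b ha hb]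
    noncomm_ring

end LinearMaps

theorem stmt_4 {n s : ℕ} (K : Type*) [Field K]
    (hn : 2 ≤ n) (hs1 : 1 ≤ s) (hs2 : 2 * s ≤ n)
    (δ : Matrix (Fin n) (Fin n) K → Matrix (Fin n) (Fin n) K)
    (hδ : ∀ x y : Matrix (Fin n) (Fin n) K,
      x.rank = s → y.rank = s → δ (x * y) = δ x * y + x * δ y) :
    ∀ x y : Matrix (Fin n) (Fin n) K,
      x.rank = 1 → y.rank = s → δ (x * y) = δ x * y + x * δ y := by
  intro x y hx hy
  let e : Matrix (Fin n) (Fin n) K ≃ₐ[K] Module.End K (Fin n → K) := Matrix.toLinAlgEquiv'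
  have hrank (z : Matrix (Fin n) (Fin n) K) :
      Module.finrank K (LinearMap.range (e z)) = z.rank := rfl
  have h := Module.End.leibniz_of_finrank_range_eq_one (D := fun f => e (δ (e.symm f))) hs1
    (by simpa using hs2)
    (fun f g hf hg => by
      rw [← e.apply_symm_apply f, hrank] at hf
      rw [← e.apply_symm_apply g, hrank] at hg
      simp [hδ _ _ hf hg])
    ((hrank x).trans hx) ((hrank y).trans hy)
  apply e.injective
  simpa using h
end

section
/- Let n ≥ 2 and 1 ≤ s ≤ n/2 be integers and let K be a field. If a map δ : M_n(K) → M_n(K) satisfies δ(xy) = δ(x)y + xδ(y) for all matrices x, y ∈ M_n(K) of rank exactly s, then there exists a derivation D of M_n(K) such that δ(x) = D(x) for every x ∈ M_n(K) with rank(x) ≤ s. -/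
open Matrix

namespace RankDerivation

open Module Submodule

variable {K V : Type*} [Field K] [AddCommGroup V] [Module K V]

lemma finrank_range_smulRight_le (φ : V →ₗ[K] K) (u : V) :
    finrank K (LinearMap.range (φ.smulRight u)) ≤ 1 := by
  have h : LinearMap.range (φ.smulRight u) ≤ K ∙ u := by
    rintro _ ⟨v, rfl⟩
    exact smul_mem _ _ (mem_span_singleton_self u)
  exact (finrank_mono h).trans (finrank_span_le_card (R := K) ({u} : Set V) |>.trans (by simp))

section RankOneCommutator

variable {T : V → V}

lemma map_add_of_commutator (hV : 2 ≤ finrank K V)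
    (hT : ∀ (φ : V →ₗ[K] K) (a : V), ∃ y : End K V, ∀ u, T (φ u • a) = y u + φ (T u) • a)
    (u v : V) : T (u + v) = T u + T v := by
  have h0 : T 0 = 0 := by
    obtain ⟨y, hy⟩ := hT 0 0
    simpa using hy 0
  have hmem (u v : V) : T (u + v) - T u - T v ∈ K ∙ v := by
    by_contra hnot
    obtain ⟨φ, hφ, hle⟩ := exists_le_ker_of_notMem hnot
    have hφv : φ v = 0 := hle (mem_span_singleton_self v)
    refine hφ ?_
    obtain ⟨y, hy⟩ := hT φ (T (u + v) - T u - T v)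
    have h1 := hy (u + v)
    have h2 := hy v
    rw [map_add, hφv, add_zero, hy u, map_add] at h1
    rw [hφv, zero_smul, h0] at h2
    have h3 : φ (T (u + v) - T u - T v) • (T (u + v) - T u - T v) = 0 := by
      rw [map_sub, map_sub]
      linear_combination (norm := module) h2 - h1
    rcases smul_eq_zero.1 h3 with h | h
    · exact h
    · rw [h, map_zero]
  have hindep {u v : V} (huv : v ∉ K ∙ u) : T (u + v) = T u + T v := by
    have h1 := hmem u v
    have h2 := hmem v u
    rw [add_comm v u, sub_right_comm] at h2
    have hd : Disjoint (K ∙ u) (K ∙ v) := disjoint_span_singleton.2 fun h => absurd h huv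
    have := disjoint_def.1 hd _ h2 h1
    rwa [sub_sub, sub_eq_zero] at this
  rcases eq_or_ne u 0 with rfl | hu
  · simp [h0]
  by_cases huv : v ∈ K ∙ u
  · obtain ⟨w, -, hw⟩ : ∃ w ∈ (⊤ : Submodule K V), w ∉ K ∙ u := by
      refine SetLike.exists_of_lt (lt_top_iff_ne_top.2 fun h => ?_)
      have := finrank_span_singleton (K := K) hu
      rw [h, finrank_top] at this
      omega
    have hsum : u + v ∈ K ∙ u := add_mem (mem_span_singleton_self u) huv
    have hle {z : V} (hz : z ∈ K ∙ u) : w ∉ K ∙ z := fun h =>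
      hw ((span_singleton_le_iff_mem _ _).2 hz h)
    have hvw : v + w ∉ K ∙ u := fun h => hw ((Submodule.add_mem_iff_right _ huv).1 h)
    have h1 := hindep (hle hsum)
    rw [add_assoc, hindep hvw, hindep (hle huv), ← add_assoc] at h1
    exact (add_right_cancel h1).symm
  · exact hindep huv

lemma exists_map_smul_of_commutator (hV : 2 ≤ finrank K V)
    (hT : ∀ (φ : V →ₗ[K] K) (a : V), ∃ y : End K V, ∀ u, T (φ u • a) = y u + φ (T u) • a)
    (r : K) : ∃ d : K, ∀ u, T (r • u) = r • T u + d • u := by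
  have hcomm (φ : V →ₗ[K] K) (a u : V) :
      T (r • φ u • a) - r • T (φ u • a) = φ (T (r • u) - r • T u) • a := by
    obtain ⟨y, hy⟩ := hT φ a
    have h := hy (r • u)
    rw [map_smul, smul_eq_mul, mul_smul, map_smul] at h
    rw [h, hy u, map_sub, map_smul]
    module
  have : Nontrivial V := nontrivial_of_finrank_pos (R := K) (by omega)
  obtain ⟨w, hw⟩ := exists_ne (0 : V)
  obtain ⟨φ, hφ⟩ := Projective.exists_dual_eq_one K hw
  refine ⟨φ (T (r • w) - r • T w), fun u => ?_⟩
  have h := hcomm φ u w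
  rw [hφ, one_smul] at h
  rw [← h]
  abel

end RankOneCommutator

variable [FiniteDimensional K V]

/-- Between two nested subspaces there is one of every intermediate dimension. -/
lemma exists_between_finrank_eq {A B : Submodule K V} (hAB : A ≤ B) {s : ℕ}
    (hA : finrank K A ≤ s) (hB : s ≤ finrank K B) :
    ∃ W : Submodule K V, A ≤ W ∧ W ≤ B ∧ finrank K W = s := by
  induction s, hA using Nat.le_induction with
  | base => exact ⟨A, le_rfl, hAB, rfl⟩
  | succ k _ ih =>
    obtain ⟨W, hAW, hWB, hW⟩ := ih (by omega)
    have hlt : W < B := lt_of_le_of_ne hWB (by rintro rfl; omega)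
    obtain ⟨v, hvB, hvW⟩ := SetLike.exists_of_lt hlt
    refine ⟨W ⊔ K ∙ v, hAW.trans le_sup_left, sup_le hWB ?_, ?_⟩
    · simpa using hvB
    · rw [finrank_sup_span_singleton hvW, hW]

/-- An endomorphism factors through two endomorphisms of rank `s`, where the range of the first
and the kernel of the second may be prescribed. -/
lemma exists_mul_eq_of_range_le_of_le_ker {s : ℕ} (hs : 2 * s ≤ finrank K V) {z : End K V}
    {W C : Submodule K V} (hW : finrank K W = s) (hC : finrank K C + s = finrank K V)
    (hzW : LinearMap.range z ≤ W) (hzC : C ≤ LinearMap.ker z) :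
    ∃ b c : End K V, b * c = z ∧ LinearMap.range b = W ∧ LinearMap.ker c = C ∧
      finrank K (LinearMap.range c) = s := by
  obtain ⟨R, hR⟩ := C.exists_isCompl
  obtain ⟨W', -, hW'C, hW'⟩ := exists_between_finrank_eq (bot_le : ⊥ ≤ C) (s := s)
    (by simp) (by omega)
  obtain ⟨Q, hQ⟩ := W'.exists_isCompl
  let e : W' ≃ₗ[K] W := LinearEquiv.ofFinrankEq _ _ (hW'.trans hW.symm)
  let c : End K V := R.projection C hR.symm
  let k : End K V := W.subtype ∘ₗ e.toLinearMap ∘ₗ W'.projectionOnto Q hQ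
  have hc : c * c = c := isIdempotentElem_projection hR.symm
  have hker : LinearMap.ker c = C := ker_projection hR.symm
  have hzc : z * c = z := by
    ext v
    have h : v - c v ∈ C := by
      rw [← hker, LinearMap.mem_ker, map_sub, ← Module.End.mul_apply, hc, sub_self]
    have := hzC h
    rw [LinearMap.mem_ker, map_sub, sub_eq_zero] at this
    exact this.symm
  refine ⟨z + k * (1 - c), c, ?_, le_antisymm ?_ ?_, hker, ?_⟩
  · rw [add_mul, mul_assoc, sub_mul, hc, one_mul, sub_self, mul_zero, add_zero, hzc]
  · rintro _ ⟨v, rfl⟩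
    exact W.add_mem (hzW ⟨v, rfl⟩) (e _).2
  · intro w hw
    let w' : W' := e.symm ⟨w, hw⟩
    have hw' : (w' : V) ∈ C := hW'C w'.2
    refine ⟨w', ?_⟩
    have hcw : c w' = 0 := by rwa [← LinearMap.mem_ker, hker]
    have hzw : z w' = 0 := hzC hw'
    simp [hcw, hzw, k, w']
  · have := LinearMap.finrank_range_add_finrank_ker c
    rw [hker] at this
    omega

lemma exists_mul_eq_of_finrank_range_le {s : ℕ} (hs : 2 * s ≤ finrank K V) {z : End K V}
    (hz : finrank K (LinearMap.range z) ≤ s) :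
    ∃ b c : End K V, b * c = z ∧ finrank K (LinearMap.range b) = s ∧
      finrank K (LinearMap.range c) = s := by
  have hrk := LinearMap.finrank_range_add_finrank_ker z
  obtain ⟨W, hzW, -, hW⟩ := exists_between_finrank_eq (le_top : LinearMap.range z ≤ ⊤) hz
    (by rw [finrank_top]; omega)
  obtain ⟨C, -, hzC, hC⟩ := exists_between_finrank_eq (bot_le : ⊥ ≤ LinearMap.ker z)
    (s := finrank K V - s) (by simp) (by omega)
  obtain ⟨b, c, h, hb, -, hc⟩ :=
    exists_mul_eq_of_range_le_of_le_ker hs hW (by omega) hzW hzC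
  exact ⟨b, c, h, by rw [hb, hW], hc⟩

/-- A rank-one endomorphism is a product of two endomorphisms of rank `s`, where the range of
the first may be prescribed. -/
lemma exists_mul_eq_smulRight {s : ℕ} (hs1 : 1 ≤ s) (hs : 2 * s ≤ finrank K V)
    {W : Submodule K V} (hW : finrank K W = s) (φ : V →ₗ[K] K) {u : V} (hu : u ∈ W) :
    ∃ b c : End K V, b * c = φ.smulRight u ∧ LinearMap.range b = W ∧
      finrank K (LinearMap.range c) = s := by
  have hrk := LinearMap.finrank_range_add_finrank_ker (φ.smulRight u)
  have hle := finrank_range_smulRight_le φ u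
  obtain ⟨C, -, hzC, hC⟩ := exists_between_finrank_eq (bot_le : ⊥ ≤ LinearMap.ker (φ.smulRight u))
    (s := finrank K V - s) (by simp) (by omega)
  obtain ⟨b, c, h, hb, -, hc⟩ :=
    exists_mul_eq_of_range_le_of_le_ker hs hW (by omega)
      (by rintro _ ⟨v, rfl⟩; exact W.smul_mem _ hu) hzC
  exact ⟨b, c, h, hb, hc⟩

section Leibniz

variable {s : ℕ} {δ : End K V → End K V}

lemma map_zero_of_leibniz (hs1 : 1 ≤ s) (hs : 2 * s ≤ finrank K V)
    (hδ : ∀ x y : End K V, finrank K (LinearMap.range x) = s → finrank K (LinearMap.range y) = s →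
      δ (x * y) = δ x * y + x * δ y) : δ 0 = 0 := by
  ext q
  rw [LinearMap.zero_apply, ← Module.forall_dual_apply_eq_zero_iff K]
  intro p
  have hp := LinearMap.finrank_range_add_finrank_ker p
  have hp1 : finrank K (LinearMap.range p) ≤ 1 := by
    simpa using finrank_le (LinearMap.range p)
  obtain ⟨W, -, hWp, hW⟩ := exists_between_finrank_eq (bot_le : ⊥ ≤ LinearMap.ker p)
    (s := s) (by simp) (by omega)
  have hq : finrank K (K ∙ q) ≤ 1 :=
    finrank_span_le_card (R := K) ({q} : Set V) |>.trans (by simp)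
  obtain ⟨C, hqC, -, hC⟩ := exists_between_finrank_eq (le_top : K ∙ q ≤ ⊤)
    (s := finrank K V - s) (by omega) (by rw [finrank_top]; omega)
  obtain ⟨b, c, h, hb, hcC, hc⟩ :=
    exists_mul_eq_of_range_le_of_le_ker (z := 0) (C := C) hs hW (by omega) (by simp) (by simp)
  have hcq : c q = 0 := by
    rw [← LinearMap.mem_ker, hcC]
    exact hqC (mem_span_singleton_self q)
  have hpb : p (b (δ c q)) = 0 := hWp (hb ▸ LinearMap.mem_range_self b _)
  rw [← h, hδ b c (by rw [hb, hW]) hc]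
  simp [hcq, hpb]

/-- The Leibniz rule for a factor of rank `s` and a factor of rank at most one. -/
lemma leibniz_smulRight (hs1 : 1 ≤ s) (hs : 2 * s ≤ finrank K V)
    (hδ : ∀ x y : End K V, finrank K (LinearMap.range x) = s → finrank K (LinearMap.range y) = s →
      δ (x * y) = δ x * y + x * δ y)
    {x : End K V} (hx : finrank K (LinearMap.range x) = s) (φ : V →ₗ[K] K) (u : V) :
    δ (x * φ.smulRight u) = δ x * φ.smulRight u + x * δ (φ.smulRight u) := by
  have h0 := map_zero_of_leibniz hs1 hs hδ
  have hrk := LinearMap.finrank_range_add_finrank_ker x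
  by_cases hxu : x u = 0
  · have hspan : finrank K (K ∙ u) ≤ 1 :=
      finrank_span_le_card (R := K) ({u} : Set V) |>.trans (by simp)
    obtain ⟨W, huW, hWx, hW⟩ := exists_between_finrank_eq (s := s)
      (show K ∙ u ≤ LinearMap.ker x by simpa using hxu) (by omega) (by omega)
    obtain ⟨b, c, h, hb, hc⟩ := exists_mul_eq_smulRight hs1 hs hW φ
      (huW (mem_span_singleton_self u))
    have hxb : x * b = 0 := by
      ext v
      exact hWx (hb ▸ LinearMap.mem_range_self b v)
    have hxb' := hδ x b hx (by rw [hb, hW])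
    rw [hxb, h0] at hxb'
    calc δ (x * φ.smulRight u) = 0 := by rw [← h, ← mul_assoc, hxb, zero_mul, h0]
      _ = (δ x * b + x * δ b) * c + x * b * δ c := by rw [← hxb', hxb, zero_mul, zero_mul, add_zero]
      _ = δ x * φ.smulRight u + x * δ (φ.smulRight u) := by
        rw [← h, hδ b c (by rw [hb, hW]) hc]
        noncomm_ring
  · have hdisj : Disjoint (K ∙ u) (LinearMap.ker x) := by
      rw [disjoint_comm, disjoint_span_singleton' (by rintro rfl; simp at hxu)]
      exact hxu
    obtain ⟨W, huW, hWx⟩ := hdisj.exists_isCompl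
    have hW : finrank K W = s := by
      have := finrank_add_eq_of_isCompl hWx
      omega
    obtain ⟨b, c, h, hb, hc⟩ := exists_mul_eq_smulRight hs1 hs hW φ
      (huW (mem_span_singleton_self u))
    have hxb : finrank K (LinearMap.range (x * b)) = s := by
      rw [Module.End.mul_eq_comp, LinearMap.range_comp, hb, ← hx, LinearMap.range_eq_map x,
        ← hWx.sup_eq_top, Submodule.map_sup, (LinearMap.le_ker_iff_map (f := x)).1 le_rfl,
        sup_bot_eq]
    have hbs : finrank K (LinearMap.range b) = s := by rw [hb, hW]
    rw [← h, ← mul_assoc, hδ _ c hxb hc, hδ x b hx hbs, hδ b c hbs hc]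
    noncomm_ring

end Leibniz

/-- A map obeying the Leibniz rule on endomorphisms of rank `s` agrees with a derivation on
endomorphisms of rank at most `s`. -/
theorem exists_derivation_of_leibniz {s : ℕ} {δ : End K V → End K V} (hs1 : 1 ≤ s)
    (hs : 2 * s ≤ finrank K V)
    (hδ : ∀ x y : End K V, finrank K (LinearMap.range x) = s → finrank K (LinearMap.range y) = s →
      δ (x * y) = δ x * y + x * δ y) :
    ∃ D : End K V → End K V, (∀ x y, D (x + y) = D x + D y) ∧
      (∀ x y, D (x * y) = D x * y + x * D y) ∧
      ∀ x, finrank K (LinearMap.range x) ≤ s → δ x = D x := by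
  have hV : 2 ≤ finrank K V := by omega
  have : Nontrivial V := nontrivial_of_finrank_pos (R := K) (by omega)
  obtain ⟨w, hw⟩ := exists_ne (0 : V)
  obtain ⟨ψ, hψ⟩ := Projective.exists_dual_eq_one K hw
  let T : V → V := fun u => δ (ψ.smulRight u) w
  have hTs {x : End K V} (hx : finrank K (LinearMap.range x) = s) (u : V) :
      T (x u) = δ x u + x (T u) := by
    have h := LinearMap.congr_fun (leibniz_smulRight hs1 hs hδ hx ψ u) w
    have hmul : x * ψ.smulRight u = ψ.smulRight (x u) := by
      ext v
      simp
    simpa [hmul, hψ] using h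
  have hT {x : End K V} (hx : finrank K (LinearMap.range x) ≤ s) (u : V) :
      T (x u) = δ x u + x (T u) := by
    obtain ⟨b, c, rfl, hb, hc⟩ := exists_mul_eq_of_finrank_range_le hs hx
    rw [hδ b c hb hc, Module.End.mul_apply, hTs hb, hTs hc]
    simp [add_assoc]
  have hT1 (φ : V →ₗ[K] K) (a : V) :
      ∃ y : End K V, ∀ u, T (φ u • a) = y u + φ (T u) • a :=
    ⟨δ (φ.smulRight a), hT ((finrank_range_smulRight_le φ a).trans hs1)⟩
  have hadd := map_add_of_commutator hV hT1
  choose d hd using exists_map_smul_of_commutator hV hT1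
  let D : End K V → End K V := fun x =>
    { toFun := fun u => T (x u) - x (T u)
      map_add' := fun u v => by
        simp only [map_add, hadd]
        abel
      map_smul' := fun r u => by
        simp only [map_smul, hd, map_add, RingHom.id_apply]
        module }
  have hD (x : End K V) (u : V) : D x u = T (x u) - x (T u) := rfl
  refine ⟨D, fun x y => ?_, fun x y => ?_, fun x hx => ?_⟩
  · ext u
    simp only [hD, LinearMap.add_apply, hadd]
    abel
  · ext u
    simp only [hD, LinearMap.add_apply, Module.End.mul_apply, map_sub]
    abel
  · ext u
    rw [hD, hT hx, add_sub_cancel_right]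

end RankDerivation

theorem stmt_13 {n s : ℕ} (K : Type*) [Field K]
    (hn : 2 ≤ n) (hs1 : 1 ≤ s) (hs2 : 2 * s ≤ n)
    (δ : Matrix (Fin n) (Fin n) K → Matrix (Fin n) (Fin n) K)
    (hδ : ∀ x y : Matrix (Fin n) (Fin n) K,
      x.rank = s → y.rank = s → δ (x * y) = δ x * y + x * δ y) :
    ∃ D : Matrix (Fin n) (Fin n) K → Matrix (Fin n) (Fin n) K,
      (∀ x y : Matrix (Fin n) (Fin n) K, D (x + y) = D x + D y) ∧
      (∀ x y : Matrix (Fin n) (Fin n) K, D (x * y) = D x * y + x * D y) ∧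
      (∀ x : Matrix (Fin n) (Fin n) K, x.rank ≤ s → δ x = D x) := by
  let e : Matrix (Fin n) (Fin n) K ≃ₐ[K] Module.End K (Fin n → K) := Matrix.toLinAlgEquiv'
  have hrank (x : Matrix (Fin n) (Fin n) K) :
      Module.finrank K (LinearMap.range (e x)) = x.rank := rfl
  have hrank' (f : Module.End K (Fin n → K)) :
      (e.symm f).rank = Module.finrank K (LinearMap.range f) := by
    rw [← hrank, AlgEquiv.apply_symm_apply]
  obtain ⟨D, hadd, hmul, hD⟩ := RankDerivation.exists_derivation_of_leibniz
    (δ := fun f => e (δ (e.symm f))) hs1 (by simpa using hs2) fun x y hx hy => by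
      rw [map_mul, hδ _ _ ((hrank' x).trans hx) ((hrank' y).trans hy)]
      simp
  refine ⟨fun x => e.symm (D (e x)), fun x y => ?_, fun x y => ?_, fun x hx => ?_⟩
  · simp [hadd]
  · simp [hmul]
  · change δ x = e.symm (D (e x))
    rw [← hD (e x) hx]
    simp
end

section
/- Let n ≥ 2 and 1 ≤ s ≤ n/2 be integers and K a field. If δ : M_n(K) → M_n(K) satisfies δ(xy) = δ(x)y + xδ(y) for all rank-s matrices x, y, then there exist a matrix A ∈ M_n(K) and a derivation μ of the field K such that δ(x) = Ax − xA + μ̄(x) for all x of rank ≤ s, where μ̄ applies μ entrywise. -/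
open Matrix Module
open LinearMap (ker range)

theorem Submodule.exists_between_finrank_eq_s14 {K V : Type*} [Field K] [AddCommGroup V] [Module K V]
    [FiniteDimensional K V] {A B : Submodule K V} (hAB : A ≤ B) {k : ℕ} (hA : finrank K A ≤ k)
    (hB : k ≤ finrank K B) : ∃ W : Submodule K V, A ≤ W ∧ W ≤ B ∧ finrank K W = k := by
  induction k, hA using Nat.le_induction with
  | base => exact ⟨A, le_rfl, hAB, rfl⟩
  | succ k _ ih =>
    obtain ⟨W, hAW, hWB, hW⟩ := ih (by omega)
    obtain ⟨v, hvB, hvW⟩ : ∃ v ∈ B, v ∉ W := by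
      by_contra! h
      have := Submodule.finrank_mono (show B ≤ W from h)
      omega
    refine ⟨W ⊔ K ∙ v, hAW.trans le_sup_left,
      sup_le hWB ((Submodule.span_singleton_le_iff_mem v B).2 hvB), ?_⟩
    rw [Submodule.finrank_sup_span_singleton hvW, hW]

/-- An endomorphism with image in a subspace `W` of dimension `s`, where `2 s ≤ dim V`, is a product
of two endomorphisms of rank `s`, the left one having image `W`. -/
theorem LinearMap.exists_comp_eq_of_range_le {K V : Type*} [Field K] [AddCommGroup V] [Module K V]
    [FiniteDimensional K V] {s : ℕ} (hs : 2 * s ≤ finrank K V) (f : V →ₗ[K] V)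
    (W : Submodule K V) (hW : finrank K W = s) (hf : range f ≤ W) :
    ∃ g h : V →ₗ[K] V, g ∘ₗ h = f ∧ range g = W ∧ finrank K (range h) = s := by
  obtain ⟨C, hC⟩ := W.exists_isCompl
  have hCW := Submodule.finrank_add_eq_of_isCompl hC
  have hfr := f.finrank_range_add_finrank_ker
  have hfW := Submodule.finrank_mono hf
  obtain ⟨S, -, hSf, hS⟩ := Submodule.exists_between_finrank_eq_s14 (bot_le (a := ker f))
    (k := finrank K V - s) (by simp) (by omega)
  have hSq := S.finrank_quotient_add_finrank
  obtain ⟨i, hi⟩ := finrank_le_iff_exists_linearMap.1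
    (show finrank K (V ⧸ S) ≤ finrank K C by omega)
  have hg (w) (hw : w ∈ W) : W.projection C hC w = w := Submodule.projection_apply_of_mem_left hC hw
  have hgf (v) : W.projection C hC (f v) = f v := hg _ (hf ⟨v, rfl⟩)
  have hgi (v) : W.projection C hC (i v) = 0 := Submodule.projection_apply_right hC _
  let h : V →ₗ[K] V := f + C.subtype ∘ₗ i ∘ₗ S.mkQ
  have hgh : W.projection C hC ∘ₗ h = f := by
    ext v
    simp [h, hgf, hgi]
  refine ⟨W.projection C hC, h, hgh, Submodule.range_projection hC, ?_⟩
  have hker : ker h = S := by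
    ext v
    constructor
    · intro hv
      have hfv : f v = 0 := by rw [← hgh, LinearMap.comp_apply, LinearMap.mem_ker.1 hv, map_zero]
      have : ((i (S.mkQ v) : C) : V) = 0 := by simpa [h, hfv] using hv
      have : S.mkQ v = 0 := hi (by simpa using this)
      simpa using this
    · intro hv
      have h1 : f v = 0 := hSf hv
      have h2 : S.mkQ v = 0 := by simpa using hv
      rw [LinearMap.mem_ker]
      simp only [h, LinearMap.add_apply, LinearMap.comp_apply, h1, h2, map_zero, add_zero]
  have := h.finrank_range_add_finrank_ker
  rw [hker] at this
  omega

theorem LinearMap.exists_mul_eq_self_sq_eq_zero {K V : Type*} [Field K] [AddCommGroup V]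
    [Module K V] [FiniteDimensional K V] {s : ℕ} (hs : 2 * s ≤ finrank K V) :
    ∃ p z : V →ₗ[K] V, finrank K (range p) = s ∧ finrank K (range z) = s ∧
      z ∘ₗ p = z ∧ p ∘ₗ z = 0 ∧ z ∘ₗ z = 0 := by
  obtain ⟨W, -, -, hW⟩ := Submodule.exists_between_finrank_eq_s14 (bot_le (a := (⊤ : Submodule K V)))
    (k := s) (by simp) (by rw [finrank_top]; omega)
  obtain ⟨C, hC⟩ := W.exists_isCompl
  have hCW := Submodule.finrank_add_eq_of_isCompl hC
  obtain ⟨i, hi⟩ := finrank_le_iff_exists_linearMap.1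
    (show finrank K W ≤ finrank K C by omega)
  have hpi (v) : W.projectionOnto C hC (i v) = 0 := Submodule.projectionOnto_apply_right hC _
  have hpi' (v) : W.projection C hC (i v) = 0 := Submodule.projection_apply_right hC _
  refine ⟨W.projection C hC, C.subtype ∘ₗ i ∘ₗ W.projectionOnto C hC, ?_, ?_, ?_, ?_, ?_⟩
  · rw [Submodule.range_projection, hW]
  · rw [← LinearMap.comp_assoc, LinearMap.range_comp_of_range_eq_top _
      (Submodule.range_projectionOnto hC), LinearMap.finrank_range_of_inj, hW]
    exact C.injective_subtype.comp hi
  · ext v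
    simp only [LinearMap.comp_apply, Submodule.projectionOnto_projection]
  · ext v
    simp [hpi']
  · ext v
    simp [hpi]

theorem LinearMap.rank_toMatrix' {K : Type*} [Field K] {n : ℕ}
    (f : (Fin n → K) →ₗ[K] (Fin n → K)) : f.toMatrix'.rank = finrank K (range f) := by
  rw [Matrix.rank, ← Matrix.toLin'_apply', Matrix.toLin'_toMatrix']

namespace Matrix

variable {K : Type*} [Field K] {n s : ℕ}

theorem exists_mul_eq_of_range_le (hs : 2 * s ≤ n) (x : Matrix (Fin n) (Fin n) K)
    (W : Submodule K (Fin n → K)) (hW : finrank K W = s) (hx : range x.mulVecLin ≤ W) :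
    ∃ g h : Matrix (Fin n) (Fin n) K,
      g * h = x ∧ range g.mulVecLin = W ∧ g.rank = s ∧ h.rank = s := by
  obtain ⟨g, h, hgh, hg, hh⟩ :=
    LinearMap.exists_comp_eq_of_range_le (by simpa using hs) x.mulVecLin W hW hx
  refine ⟨g.toMatrix', h.toMatrix', ?_, ?_, ?_, ?_⟩
  · rw [← LinearMap.toMatrix'_comp, hgh, ← toLin'_apply', LinearMap.toMatrix'_toLin']
  · rw [← toLin'_apply', toLin'_toMatrix', hg]
  · rw [LinearMap.rank_toMatrix', hg, hW]
  · rw [LinearMap.rank_toMatrix', hh]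

theorem exists_mul_eq_of_rank_le (hs : 2 * s ≤ n) (x : Matrix (Fin n) (Fin n) K)
    (hx : x.rank ≤ s) :
    ∃ g h : Matrix (Fin n) (Fin n) K, g * h = x ∧ g.rank = s ∧ h.rank = s := by
  obtain ⟨W, hxW, -, hW⟩ := Submodule.exists_between_finrank_eq_s14 (le_top (a := range x.mulVecLin))
    hx (by rw [finrank_top, finrank_fin_fun]; omega)
  obtain ⟨g, h, hgh, -, hg, hh⟩ := exists_mul_eq_of_range_le hs x W hW hxW
  exact ⟨g, h, hgh, hg, hh⟩

theorem exists_mul_eq_vecMulVec (hs1 : 1 ≤ s) (hs2 : 2 * s ≤ n) (x : Matrix (Fin n) (Fin n) K)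
    (hx : x.rank = s) (u v : Fin n → K) :
    ∃ g h : Matrix (Fin n) (Fin n) K, g * h = vecMulVec u v ∧ g.rank = s ∧ h.rank = s ∧
      ((x * g).rank = s ∨ x * g = 0) := by
  have hrn := x.mulVecLin.finrank_range_add_finrank_ker
  rw [finrank_fin_fun] at hrn
  change x.rank + _ = _ at hrn
  have hrange (W : Submodule K (Fin n → K)) (hu : u ∈ W) :
      range (vecMulVec u v).mulVecLin ≤ W := by
    rintro _ ⟨w, rfl⟩
    rw [mulVecLin_apply, vecMulVec_mulVec, op_smul_eq_smul]
    exact W.smul_mem _ hu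
  by_cases hu : x *ᵥ u = 0
  · obtain ⟨W, huW, hWx, hW⟩ := Submodule.exists_between_finrank_eq_s14 (A := K ∙ u)
      (B := ker x.mulVecLin) (k := s) (by simpa using hu)
      ((finrank_span_le_card {u}).trans (by simpa using hs1)) (by omega)
    obtain ⟨g, h, hgh, hgW, hg, hh⟩ := exists_mul_eq_of_range_le hs2 (vecMulVec u v) W hW
      (hrange W (huW (Submodule.mem_span_singleton_self u)))
    refine ⟨g, h, hgh, hg, hh, Or.inr ?_⟩
    refine ext_of_mulVec_single fun i => ?_
    rw [← mulVec_mulVec, zero_mulVec]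
    exact hWx (hgW ▸ LinearMap.mem_range_self g.mulVecLin _)
  · have hu0 : u ≠ 0 := by
      rintro rfl
      simp at hu
    have hdisj : Disjoint (ker x.mulVecLin) (K ∙ u) :=
      (Submodule.disjoint_span_singleton' hu0).2 (by simpa using hu)
    obtain ⟨C, hC⟩ := (ker x.mulVecLin ⊔ K ∙ u).exists_isCompl
    have hW : IsCompl (ker x.mulVecLin) (K ∙ u ⊔ C) :=
      hdisj.isCompl_sup_right_of_isCompl_sup_left hC
    have hd := Submodule.finrank_add_eq_of_isCompl hW
    rw [finrank_fin_fun] at hd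
    obtain ⟨g, h, hgh, hgW, hg, hh⟩ := exists_mul_eq_of_range_le hs2 (vecMulVec u v)
      (K ∙ u ⊔ C) (by omega)
      (hrange _ (Submodule.mem_sup_left (Submodule.mem_span_singleton_self u)))
    refine ⟨g, h, hgh, hg, hh, Or.inl ?_⟩
    rw [rank, mulVecLin_mul, LinearMap.range_comp, hgW]
    have hinj : Function.Injective (x.mulVecLin.domRestrict (K ∙ u ⊔ C)) :=
      LinearMap.injective_domRestrict_iff.2 hW.disjoint.symm
    rw [← LinearMap.range_domRestrict, LinearMap.finrank_range_of_inj hinj]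
    omega

theorem exists_mul_eq_self_sq_eq_zero (hs : 2 * s ≤ n) :
    ∃ p z : Matrix (Fin n) (Fin n) K, p.rank = s ∧ z.rank = s ∧
      z * p = z ∧ p * z = 0 ∧ z * z = 0 := by
  obtain ⟨p, z, hp, hz, hzp, hpz, hzz⟩ :=
    LinearMap.exists_mul_eq_self_sq_eq_zero (K := K) (V := Fin n → K) (by simpa using hs)
  refine ⟨p.toMatrix', z.toMatrix', ?_, ?_, ?_, ?_, ?_⟩
  · rw [LinearMap.rank_toMatrix', hp]
  · rw [LinearMap.rank_toMatrix', hz]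
  · rw [← LinearMap.toMatrix'_comp, hzp]
  · rw [← LinearMap.toMatrix'_comp, hpz, map_zero]
  · rw [← LinearMap.toMatrix'_comp, hzz, map_zero]

variable {δ : Matrix (Fin n) (Fin n) K → Matrix (Fin n) (Fin n) K}

theorem map_zero_of_leibniz_rank_eq (hs : 2 * s ≤ n)
    (hδ : ∀ x y, x.rank = s → y.rank = s → δ (x * y) = δ x * y + x * δ y) : δ 0 = 0 := by
  obtain ⟨p, z, hp, hz, hzp, hpz, hzz⟩ := exists_mul_eq_self_sq_eq_zero (K := K) hs
  have h1 : δ 0 = δ p * z + p * δ z := by rw [← hδ p z hp hz, hpz]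
  have h2 : δ z = δ z * p + z * δ p := by rw [← hδ z p hz hp, hzp]
  have h3 : δ 0 = z * δ 0 := by
    calc δ 0 = δ z * z + z * δ z := by rw [← hδ z z hz hz, hzz]
      _ = (δ z * p + z * δ p) * z + (z * p) * δ z := by rw [← h2, hzp]
      _ = δ z * (p * z) + z * (δ p * z + p * δ z) := by noncomm_ring
      _ = z * δ 0 := by rw [hpz, ← h1, mul_zero, zero_add]
  rw [h3, h3, ← mul_assoc, hzz, zero_mul]

theorem leibniz_mul_vecMulVec (hs1 : 1 ≤ s) (hs2 : 2 * s ≤ n)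
    (hδ : ∀ x y, x.rank = s → y.rank = s → δ (x * y) = δ x * y + x * δ y)
    (x : Matrix (Fin n) (Fin n) K) (hx : x.rank ≤ s) (u v : Fin n → K) :
    δ (x * vecMulVec u v) = δ x * vecMulVec u v + x * δ (vecMulVec u v) := by
  have key (x : Matrix (Fin n) (Fin n) K) (hx : x.rank = s) (u v : Fin n → K) :
      δ (x * vecMulVec u v) = δ x * vecMulVec u v + x * δ (vecMulVec u v) := by
    obtain ⟨g, h, hgh, hg, hh, hxg⟩ := exists_mul_eq_vecMulVec hs1 hs2 x hx u v
    have hxgh : δ (x * g * h) = δ (x * g) * h + x * g * δ h := by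
      rcases hxg with hxg | hxg
      · exact hδ _ _ hxg hh
      · simp [hxg, map_zero_of_leibniz_rank_eq hs2 hδ]
    rw [← hgh, ← mul_assoc, hxgh, hδ x g hx hg, hδ g h hg hh]
    noncomm_ring
  obtain ⟨g, h, rfl, hg, hh⟩ := exists_mul_eq_of_rank_le hs2 x hx
  have hgu := key g hg (h *ᵥ u) v
  rw [← mul_vecMulVec] at hgu
  rw [mul_assoc, hgu, key h hh, hδ g h hg hh]
  noncomm_ring

/-- A map satisfying the Leibniz rule on matrices of rank at most one is, on these, the sum of an
inner derivation and an entrywise derivation. -/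
theorem exists_derivation_of_leibniz_vecMulVec (hn : 2 ≤ n)
    (hδ : ∀ u v w z : Fin n → K, δ (vecMulVec u v * vecMulVec w z) =
      δ (vecMulVec u v) * vecMulVec w z + vecMulVec u v * δ (vecMulVec w z)) :
    ∃ (A : Matrix (Fin n) (Fin n) K) (μ : K → K),
      (∀ a b : K, μ (a + b) = μ a + μ b) ∧
      (∀ a b : K, μ (a * b) = a * μ b + μ a * b) ∧
      (∀ u v, δ (vecMulVec u v) =
        A * vecMulVec u v - vecMulVec u v * A + (vecMulVec u v).map μ) := by
  let i₀ : Fin n := ⟨0, by omega⟩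
  let i₁ : Fin n := ⟨1, by omega⟩
  have hi : i₀ ≠ i₁ := by simp [i₀, i₁]
  let e : Fin n → Fin n → K := fun i => Pi.single i 1
  let a : (Fin n → K) → Fin n → K := fun u => δ (vecMulVec u (e i₀)) *ᵥ e i₀
  let b : (Fin n → K) → Fin n → K := fun v => e i₀ ᵥ* δ (vecMulVec (e i₀) v)
  have hab (u v) : δ (vecMulVec u v) = vecMulVec (a u) v + vecMulVec u (b v) := by
    have h := hδ u (e i₀) (e i₀) v
    rw [vecMulVec_mul_vecMulVec, mul_vecMulVec, vecMulVec_mul] at h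
    simpa [e, a, b] using h
  have hb (v w z) : b ((v ⬝ᵥ w) • z) = (v ⬝ᵥ w) • b z + (b v ⬝ᵥ w + v ⬝ᵥ a w) • z := by
    have h := hδ (e i₀) v w z
    rw [vecMulVec_mul_vecMulVec] at h
    simp only [hab, add_mul, mul_add, vecMulVec_mul_vecMulVec] at h
    ext j
    have h' := congrFun (congrFun h i₀) j
    simp [vecMulVec_apply, e] at h' ⊢
    linear_combination h'
  let μ : K → K := fun c => b (c • e i₀) i₀ - c * b (e i₀) i₀
  have hμ (v w) : μ (v ⬝ᵥ w) = b v ⬝ᵥ w + v ⬝ᵥ a w := by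
    simp only [μ, hb]
    simp [e]
  have hbs (c z) : b (c • z) = c • b z + μ c • z := by
    have h := hb (c • e i₀) (e i₀) z
    rw [← hμ] at h
    simpa [e] using h
  have hμmul (c d) : μ (c * d) = c * μ d + μ c * d := by
    have h := hμ (c • e i₀) (d • e i₀)
    have h' := hμ (e i₀) (d • e i₀)
    rw [hbs, add_dotProduct, smul_dotProduct, smul_dotProduct, smul_dotProduct] at h
    simp [e] at h h'
    rw [h, h']
    ring
  have hμ0 : μ 0 = 0 := by simpa using hμmul 0 0
  have hμ1 : μ 1 = 0 := by simpa using hμmul 1 1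
  let A : Matrix (Fin n) (Fin n) K := of fun i j => a (e j) i
  have hbA (v) : b v = μ ∘ v - v ᵥ* A := by
    ext j
    have h := hμ v (e j)
    have hA : (v ᵥ* A) j = v ⬝ᵥ a (e j) := rfl
    simp only [Pi.sub_apply, Function.comp_apply, hA]
    simp [e] at h ⊢
    linear_combination -h
  have haA (w) : a w = μ ∘ w + A *ᵥ w := by
    ext i
    have h := hμ (e i) w
    have hμe : μ ∘ e i = 0 := by
      ext j
      by_cases hij : j = i
      · subst hij; simp [e, hμ1]
      · simp [e, hij, hμ0]
    have hA : e i ᵥ* A ⬝ᵥ w = (A *ᵥ w) i := by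
      rw [← dotProduct_mulVec]; simp [e]
    rw [hbA, hμe, zero_sub, neg_dotProduct, hA] at h
    simp [e] at h ⊢
    linear_combination -h
  have hμdot (v w : Fin n → K) : μ (v ⬝ᵥ w) = (μ ∘ v) ⬝ᵥ w + v ⬝ᵥ (μ ∘ w) := by
    rw [hμ, hbA, haA, sub_dotProduct, dotProduct_add, dotProduct_mulVec]
    ring
  refine ⟨A, μ, fun c d => ?_, hμmul, fun u v => ?_⟩
  · have h := hμdot (e i₀ + e i₁) (c • e i₀ + d • e i₁)
    have h1 : μ ∘ (e i₀ + e i₁) = 0 := by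
      ext j
      by_cases h0 : j = i₀
      · subst h0; simp [e, hi, hμ1]
      · by_cases h1 : j = i₁
        · subst h1; simp [e, hi.symm, hμ1]
        · simp [e, h0, h1, hμ0]
    rw [h1] at h
    simpa [e, hi, hi.symm] using h
  · rw [hab, haA, hbA, mul_vecMulVec, vecMulVec_mul]
    ext i j
    simp [vecMulVec_apply, hμmul]
    ring

end Matrix

theorem stmt_14 {n s : ℕ} (K : Type*) [Field K]
    (hn : 2 ≤ n) (hs1 : 1 ≤ s) (hs2 : 2 * s ≤ n)
    (δ : Matrix (Fin n) (Fin n) K → Matrix (Fin n) (Fin n) K)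
    (hδ : ∀ x y : Matrix (Fin n) (Fin n) K,
      x.rank = s → y.rank = s → δ (x * y) = δ x * y + x * δ y) :
    ∃ (A : Matrix (Fin n) (Fin n) K) (μ : K → K),
      (∀ a b : K, μ (a + b) = μ a + μ b) ∧
      (∀ a b : K, μ (a * b) = a * μ b + μ a * b) ∧
      (∀ x : Matrix (Fin n) (Fin n) K, x.rank ≤ s →
        δ x = A * x - x * A + x.map μ) := by
  have hL := Matrix.leibniz_mul_vecMulVec hs1 hs2 hδ
  obtain ⟨A, μ, hadd, hmul, hA⟩ := Matrix.exists_derivation_of_leibniz_vecMulVec hn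
    fun u v => hL _ ((rank_vecMulVec_le u v).trans hs1)
  refine ⟨A, μ, hadd, hmul, fun x hx => ?_⟩
  let D : Derivation ℤ K K := Derivation.mk' (AddMonoidHom.mk' μ hadd).toIntLinearMap
    fun a b => by simp [hmul, mul_comm]
  have hmap (y : Matrix (Fin n) (Fin n) K) :
      (x * y).map μ = x.map μ * y + x * y.map μ := by
    ext i j
    change D (∑ k, x i k * y k j) = ∑ k, D (x i k) * y k j + ∑ k, x i k * D (y k j)
    rw [map_sum, ← Finset.sum_add_distrib]
    exact Finset.sum_congr rfl fun k _ => by simp [mul_comm, add_comm]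
  refine Matrix.ext_of_mulVec_single fun j => ?_
  have h := hL x hx (Pi.single j 1) (Pi.single j 1)
  rw [mul_vecMulVec, hA, hA, ← mul_vecMulVec, hmap] at h
  have h' : δ x * vecMulVec (Pi.single j 1) (Pi.single j 1) =
      (A * x - x * A + x.map μ) * vecMulVec (Pi.single j 1) (Pi.single j 1) := by
    rw [eq_comm, ← sub_eq_zero] at h ⊢
    rw [← neg_eq_zero, ← h]
    noncomm_ring
  rw [mul_vecMulVec, mul_vecMulVec] at h'
  ext i
  simpa [vecMulVec_apply] using congrFun (congrFun h' i) j
end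

section
/- Let n ≥ 2 be an integer and K a field, and set m = ⌈log₂(n/2 + 1)⌉. If a map δ : M_n(K) → M_n(K) satisfies δ(xy) = δ(x)y + xδ(y) for all x, y in the union over 0 ≤ i ≤ m of the sets of rank-(n+1−2^i) matrices, then δ is a derivation of M_n(K). -/
open Matrix

/-- The diagonal idempotent matrix with zeros exactly at the positions in `A`. -/
def coordProj {n : ℕ} (K : Type*) [Field K] (A : Finset (Fin n)) : Matrix (Fin n) (Fin n) K :=
  diagonal fun i => if i ∈ A then 0 else 1

section

variable {n : ℕ} {K : Type*} [Field K]

theorem coordProj_empty : coordProj K (∅ : Finset (Fin n)) = 1 := by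
  simp [coordProj]

theorem coordProj_mul_coordProj (A B : Finset (Fin n)) :
    coordProj K A * coordProj K B = coordProj K (A ∪ B) := by
  simp only [coordProj, diagonal_mul_diagonal]
  congr 1
  ext i
  by_cases hA : i ∈ A <;> by_cases hB : i ∈ B <;> simp [hA, hB]

theorem rank_coordProj (A : Finset (Fin n)) : (coordProj K A).rank = n - A.card := by
  classical
  rw [coordProj, rank_diagonal, Fintype.card_subtype]
  have h : (Finset.univ.filter fun i : Fin n => (if i ∈ A then (0 : K) else 1) ≠ 0) = Aᶜ := by
    ext i; simp
  rw [h, Finset.card_compl, Fintype.card_fin]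

theorem coordProj_mul_apply (A : Finset (Fin n)) (x : Matrix (Fin n) (Fin n) K) (i j : Fin n) :
    (coordProj K A * x) i j = if i ∈ A then 0 else x i j := by
  simp [coordProj, diagonal_mul]

theorem mul_coordProj_apply (A : Finset (Fin n)) (x : Matrix (Fin n) (Fin n) K) (i j : Fin n) :
    (x * coordProj K A) i j = if j ∈ A then 0 else x i j := by
  simp [coordProj, mul_diagonal]

/-- Every square matrix is equivalent to a diagonal idempotent. -/
theorem exists_eq_unit_mul_coordProj_mul_unit (x : Matrix (Fin n) (Fin n) K) :
    ∃ (g h : Matrix (Fin n) (Fin n) K) (A : Finset (Fin n)),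
      IsUnit g ∧ IsUnit h ∧ x = g * coordProj K A * h := by
  classical
  obtain ⟨L, L', D, hx⟩ := Pivot.exists_list_transvec_mul_diagonal_mul_list_transvec x
  let d : Matrix (Fin n) (Fin n) K := diagonal fun i => if D i = 0 then 1 else D i
  refine ⟨(L.map TransvectionStruct.toMatrix).prod, d * (L'.map TransvectionStruct.toMatrix).prod,
    Finset.univ.filter fun i => D i = 0, ?_, ?_, ?_⟩
  · rw [isUnit_iff_isUnit_det, TransvectionStruct.det_toMatrix_prod]
    exact isUnit_one
  · rw [isUnit_iff_isUnit_det, det_mul, TransvectionStruct.det_toMatrix_prod, mul_one,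
      det_diagonal, isUnit_iff_ne_zero, Finset.prod_ne_zero_iff]
    intro i _
    split_ifs with h
    · exact one_ne_zero
    · exact h
  · have h : diagonal D = coordProj K (Finset.univ.filter fun i => D i = 0) * d := by
      simp only [coordProj, d, diagonal_mul_diagonal]
      congr 1
      ext i
      by_cases h : D i = 0 <;> simp [h]
    rw [hx, h]
    simp only [mul_assoc]

/-- A set of cardinality at most `2 ^ (m + 1) - 2` is a union of two sets of equal cardinality
`2 ^ l - 1` for some `l ≤ m`. -/
theorem Finset.exists_union_eq_card_eq_two_pow_sub_one {α : Type*} [DecidableEq α] (A : Finset α)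
    {m : ℕ} (hA : A.card + 2 ≤ 2 ^ (m + 1)) :
    ∃ l ≤ m, ∃ B C : Finset α, B ∪ C = A ∧ B.card + 1 = 2 ^ l ∧ C.card + 1 = 2 ^ l := by
  have hex : ∃ l, A.card + 2 ≤ 2 ^ (l + 1) := ⟨m, hA⟩
  obtain ⟨l, hlm, hl, hlA⟩ : ∃ l ≤ m, A.card + 2 ≤ 2 ^ (l + 1) ∧ 2 ^ l ≤ A.card + 1 := by
    classical
    refine ⟨Nat.find hex, Nat.find_min' hex hA, Nat.find_spec hex, ?_⟩
    rcases h : Nat.find hex with _ | k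
    · simp
    · have := Nat.find_min hex (m := k) (by omega)
      omega
  have hpos : 0 < 2 ^ l := by positivity
  rw [pow_succ] at hl
  obtain ⟨B, hBA, hB⟩ := Finset.exists_subset_card_eq (s := A) (n := 2 ^ l - 1) (by omega)
  have hdiff : (A \ B).card = A.card - B.card := Finset.card_sdiff_of_subset hBA
  obtain ⟨C, hC, hCA, hCcard⟩ := Finset.exists_subsuperset_card_eq (n := 2 ^ l - 1)
    (Finset.sdiff_subset (s := A) (t := B)) (by omega) (by omega)
  refine ⟨l, hlm, B, C, ?_, by omega, by omega⟩
  refine (Finset.union_subset hBA hCA).antisymm fun a ha => ?_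
  by_cases hb : a ∈ B
  · exact Finset.mem_union_left _ hb
  · exact Finset.mem_union_right _ (hC (Finset.mem_sdiff.2 ⟨ha, hb⟩))

/-- The identity matrix with its `j`-th column replaced by `w` is invertible when `w j ≠ 0`. -/
theorem isUnit_updateCol_one {w : Fin n → K} {j : Fin n} (hw : w j ≠ 0) :
    IsUnit ((1 : Matrix (Fin n) (Fin n) K).updateCol j w) := by
  rw [isUnit_iff_isUnit_det, ← cramer_apply]
  simpa [isUnit_iff_ne_zero] using hw

/-- For an invertible `u`, the product `u * coordProj K B` can be rewritten as
`v * coordProj K B * q` with `q`, `v` invertible such that `v` maps some coordinate vector to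
the `i`-th one. -/
theorem exists_adapted_unit {u : Matrix (Fin n) (Fin n) K} (hu : IsUnit u) (B : Finset (Fin n))
    (i : Fin n) :
    ∃ (v q : Matrix (Fin n) (Fin n) K) (j : Fin n), IsUnit v ∧ IsUnit q ∧
      u * coordProj K B = v * coordProj K B * q ∧ ∀ a, v a j = if a = i then 1 else 0 := by
  have hdet := (isUnit_iff_isUnit_det u).1 hu
  let w : Fin n → K := fun a => u⁻¹ a i
  have huw : u *ᵥ w = Pi.single i 1 := by
    have : w = u⁻¹ *ᵥ Pi.single i 1 := by ext a; simp [w]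
    rw [this, mulVec_mulVec, mul_nonsing_inv _ hdet, one_mulVec]
  have hcol : ∀ j a, (u * (1 : Matrix (Fin n) (Fin n) K).updateCol j w) a j =
      if a = i then 1 else 0 := by
    intro j a
    have h := congrFun huw a
    simp only [mulVec, dotProduct, Pi.single_apply] at h
    simpa [mul_apply] using h
  have hunit : ∀ {j}, w j ≠ 0 → IsUnit (u * (1 : Matrix (Fin n) (Fin n) K).updateCol j w) :=
    fun h => hu.mul (isUnit_updateCol_one h)
  by_cases hB : ∃ j ∈ B, w j ≠ 0
  · obtain ⟨j, hj, hwj⟩ := hB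
    refine ⟨_, 1, j, hunit hwj, isUnit_one, ?_, hcol j⟩
    rw [mul_one, mul_assoc]
    congr 1
    ext a b
    rw [mul_coordProj_apply]
    by_cases hb : b ∈ B
    · simp only [coordProj, hb, diagonal_apply, if_true]
      split_ifs with hab haB
      · rfl
      · exact absurd (hab ▸ hb) haB
      · rfl
    · have hbj : b ≠ j := fun h => hb (h ▸ hj)
      by_cases hab : a = b <;> simp [coordProj, hab, hb, hbj]
  · push Not at hB
    obtain ⟨j, hwj⟩ : ∃ j, w j ≠ 0 := by
      by_contra! h
      have hw0 : w = 0 := funext h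
      have := congrFun huw i
      simp [hw0] at this
    have hj : j ∉ B := fun h => hwj (hB j h)
    have hq := isUnit_updateCol_one hwj
    set q := (1 : Matrix (Fin n) (Fin n) K).updateCol j w with hqdef
    have hcomm : q * coordProj K B = coordProj K B * q := by
      ext a b
      rw [mul_coordProj_apply, coordProj_mul_apply]
      by_cases hbj : b = j
      · subst hbj
        by_cases ha : a ∈ B <;> simp [hj, ha, hqdef, hB]
      · simp only [hqdef, updateCol_ne hbj, one_apply]
        by_cases hab : a = b
        · subst hab; rfl
        · simp [hab]
    have hqdet := (isUnit_iff_isUnit_det q).1 hq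
    refine ⟨_, q⁻¹, j, hunit hwj, (isUnit_nonsing_inv_iff).2 hq, ?_, hcol j⟩
    rw [mul_assoc u, hcomm, mul_assoc, mul_assoc, mul_nonsing_inv _ hqdet, mul_one]

/-- If an invertible `v` maps the `j`-th coordinate vector to the `i`-th one, then
`coordProj K {i} * v = v' * coordProj K {j}` for some invertible `v'`. -/
theorem exists_coordProj_singleton_mul_eq {v : Matrix (Fin n) (Fin n) K} (hv : IsUnit v)
    {i j : Fin n} (hvj : ∀ a, v a j = if a = i then 1 else 0) :
    ∃ v' : Matrix (Fin n) (Fin n) K, IsUnit v' ∧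
      coordProj K {i} * v = v' * coordProj K {j} := by
  let ρ : Fin n → K := v i - Pi.single j 1
  let t : Matrix (Fin n) (Fin n) K := vecMulVec (Pi.single j 1) ρ
  have hρ : ρ j = 0 := by simp [ρ, hvj]
  have htt : t * t = 0 := by
    simp [t, vecMulVec_mul_vecMulVec, hρ]
  have hvt : ∀ a b, (v * t) a b = if a = i then ρ b else 0 := by
    intro a b
    simp only [t, mul_vecMulVec, vecMulVec_apply, mulVec_single_one, col_apply, hvj]
    split_ifs <;> simp
  refine ⟨v * (1 - t), hv.mul ?_, ?_⟩
  · have h : (1 - t) * (1 + t) = 1 := by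
      rw [mul_add, sub_mul, sub_mul, htt]; simp
    exact IsUnit.of_mul_eq_one _ h
  · ext a b
    rw [coordProj_mul_apply, mul_coordProj_apply, mul_sub, mul_one, Matrix.sub_apply, hvt]
    by_cases ha : a = i <;> by_cases hb : b = j
    · simp [ha, hb]
    · simp [ha, hb, ρ]
    · simp [ha, hb, hvj]
    · simp [ha, hb]

/-- A map satisfying the Leibniz rule everywhere and killing all diagonal idempotents is
additive. -/
theorem map_add_of_leibniz (hn : 2 ≤ n) {δ : Matrix (Fin n) (Fin n) K → Matrix (Fin n) (Fin n) K}
    (hδ : ∀ x y, δ (x * y) = δ x * y + x * δ y) (h0 : ∀ A, δ (coordProj K A) = 0)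
    (x y : Matrix (Fin n) (Fin n) K) : δ (x + y) = δ x + δ y := by
  have hl : ∀ A x, δ (coordProj K A * x) = coordProj K A * δ x := by
    intro A x; rw [hδ, h0]; simp
  have hr : ∀ A x, δ (x * coordProj K A) = δ x * coordProj K A := by
    intro A x; rw [hδ, h0]; simp
  -- entries of `δ x` depend only on the corresponding entries of `x`
  have hloc : ∀ i j x y, x i j = y i j → δ x i j = δ y i j := by
    intro i j x y hxy
    have hcorner : ∀ z, δ z i j = δ (coordProj K {i}ᶜ * z * coordProj K {j}ᶜ) i j := by
      intro z
      rw [hr, hl, mul_coordProj_apply, coordProj_mul_apply]; simp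
    rw [hcorner x, hcorner y]
    refine congrArg (fun z => δ z i j) ?_
    ext a b
    simp only [mul_coordProj_apply, coordProj_mul_apply, Finset.mem_compl, Finset.mem_singleton]
    by_cases ha : a = i <;> by_cases hb : b = j <;> simp [ha, hb, hxy]
  have hzero : δ 0 = 0 := by simpa using hδ 0 0
  ext i j
  rw [Matrix.add_apply]
  let k : Fin n := ⟨0, by omega⟩
  let l : Fin n := ⟨1, by omega⟩
  have hkl : k ≠ l := by simp [k, l]
  let p : Matrix (Fin n) (Fin n) K := of fun _ _ => 1
  let q : Matrix (Fin n) (Fin n) K :=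
    of fun a b => (if a = k then x i b else 0) + if a = l then y i b else 0
  have hq : q = coordProj K {l} * q + coordProj K {k} * q := by
    ext a b
    simp only [Matrix.add_apply, coordProj_mul_apply, Finset.mem_singleton, q, of_apply]
    by_cases hk : a = k
    · simp [hk, hkl]
    · by_cases hl : a = l <;> simp [hk, hl, hkl.symm]
  have hδq : δ q = δ (coordProj K {l} * q) + δ (coordProj K {k} * q) := by
    ext a b
    simp only [hl, Matrix.add_apply, coordProj_mul_apply, Finset.mem_singleton]
    by_cases hk : a = k
    · simp [hk, hkl]
    · by_cases hl : a = l
      · simp [hl, hkl.symm]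
      · have h := hloc a b q 0 (by simp [q, hk, hl])
        simp [hk, hl, h, hzero]
  have hsum : δ (p * q) = δ (p * (coordProj K {l} * q)) + δ (p * (coordProj K {k} * q)) := by
    rw [hδ p, hδ p, hδ p, hδq]
    nth_rewrite 1 [hq]
    rw [mul_add, mul_add]
    abel
  have hpq : (p * q) i j = (x + y) i j := by
    simp [Matrix.mul_apply, p, q, Finset.sum_add_distrib]
  have hpx : (p * (coordProj K {l} * q)) i j = x i j := by
    simp only [p, Matrix.mul_apply (M := of _), coordProj_mul_apply, q, of_apply]
    rw [Finset.sum_eq_single k] <;> simp +contextual [hkl]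
  have hpy : (p * (coordProj K {k} * q)) i j = y i j := by
    simp only [p, Matrix.mul_apply (M := of _), coordProj_mul_apply, q, of_apply]
    rw [Finset.sum_eq_single l] <;> simp +contextual [hkl.symm]
  rw [← hloc i j _ _ hpq, ← hloc i j _ _ hpx, ← hloc i j _ _ hpy, hsum, Matrix.add_apply]

/-- A map satisfying the Leibniz rule whenever one factor is invertible, and killing all diagonal
idempotents, satisfies the Leibniz rule everywhere. -/
theorem leibniz_of_isUnit {δ : Matrix (Fin n) (Fin n) K → Matrix (Fin n) (Fin n) K}
    (hl : ∀ g x, IsUnit g → δ (g * x) = δ g * x + g * δ x)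
    (hr : ∀ x g, IsUnit g → δ (x * g) = δ x * g + x * δ g)
    (h0 : ∀ A, δ (coordProj K A) = 0)
    (x y : Matrix (Fin n) (Fin n) K) : δ (x * y) = δ x * y + x * δ y := by
  have hsingle : ∀ i y, δ (coordProj K {i} * y) = coordProj K {i} * δ y := by
    intro i y
    obtain ⟨u, k, B, hu, hk, rfl⟩ := exists_eq_unit_mul_coordProj_mul_unit y
    obtain ⟨v, q, j, hv, hq, huv, hvj⟩ := exists_adapted_unit hu B i
    obtain ⟨v', hv', hvv'⟩ := exists_coordProj_singleton_mul_eq hv hvj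
    have hδv : coordProj K {i} * δ v = δ v' * coordProj K {j} := by
      have h := congrArg δ hvv'
      rwa [hr _ _ hv, hl _ _ hv', h0, h0, zero_mul, mul_zero, zero_add, add_zero] at h
    have hδB : ∀ B, coordProj K {i} * δ (v * coordProj K B) =
        δ (coordProj K {i} * (v * coordProj K B)) := by
      intro B
      rw [← mul_assoc, hvv', mul_assoc, coordProj_mul_coordProj, hl _ _ hv, hl _ _ hv', h0, h0,
        mul_zero, mul_zero, add_zero, add_zero, ← mul_assoc, hδv, mul_assoc,
        coordProj_mul_coordProj]
    rw [huv, mul_assoc _ q k, ← mul_assoc (coordProj K {i}), hr _ _ (hq.mul hk), ← hδB,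
      hr _ _ (hq.mul hk)]
    simp only [mul_add, mul_assoc]
  have hproj : ∀ A y, δ (coordProj K A * y) = coordProj K A * δ y := by
    intro A
    induction A using Finset.induction_on with
    | empty => simp [coordProj_empty]
    | insert i A _ ih =>
      intro y
      rw [Finset.insert_eq, ← coordProj_mul_coordProj, mul_assoc, hsingle, ih, mul_assoc]
  obtain ⟨g, h, A, hg, hh, rfl⟩ := exists_eq_unit_mul_coordProj_mul_unit x
  rw [mul_assoc g, mul_assoc g, hl _ _ hg, hl _ _ hg, mul_assoc, hproj, hl _ _ hh, hr _ _ hh, h0]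
  simp only [mul_add, add_mul, mul_assoc, zero_mul, zero_add, add_assoc]

/-- A map satisfying the Leibniz rule on matrices of corank `2 ^ i - 1`, `i ≤ m`, and killing the
diagonal idempotents of corank one, is a derivation. -/
theorem derivation_of_leibniz_of_coordProj_singleton (hn : 2 ≤ n) {m : ℕ} (hm1 : 1 ≤ m)
    (hm : n + 2 ≤ 2 ^ (m + 1)) {δ : Matrix (Fin n) (Fin n) K → Matrix (Fin n) (Fin n) K}
    (hδ : ∀ x y : Matrix (Fin n) (Fin n) K,
      (∃ i ≤ m, x.rank = n + 1 - 2 ^ i) → (∃ i ≤ m, y.rank = n + 1 - 2 ^ i) →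
      δ (x * y) = δ x * y + x * δ y)
    (h1 : ∀ i, δ (coordProj K {i}) = 0) :
    (∀ x y : Matrix (Fin n) (Fin n) K, δ (x + y) = δ x + δ y) ∧
    (∀ x y : Matrix (Fin n) (Fin n) K, δ (x * y) = δ x * y + x * δ y) := by
  have hrank : ∀ (A : Finset (Fin n)) {l}, l ≤ m → A.card + 1 = 2 ^ l →
      ∃ i ≤ m, (coordProj K A).rank = n + 1 - 2 ^ i := by
    intro A l hl hA
    exact ⟨l, hl, by rw [rank_coordProj]; omega⟩
  have hunit : ∀ g : Matrix (Fin n) (Fin n) K, IsUnit g → ∃ i ≤ m, g.rank = n + 1 - 2 ^ i := by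
    intro g hg
    exact ⟨0, by omega, by simp [rank_of_isUnit g hg]⟩
  have hsplit : ∀ A : Finset (Fin n), ∃ l ≤ m, ∃ B C : Finset (Fin n),
      B ∪ C = A ∧ B.card + 1 = 2 ^ l ∧ C.card + 1 = 2 ^ l := by
    intro A
    have hA := A.card_le_univ
    rw [Fintype.card_fin] at hA
    exact A.exists_union_eq_card_eq_two_pow_sub_one (by omega)
  have h0list : ∀ (A : Finset (Fin n)) {l}, l ≤ m → A.card + 1 = 2 ^ l →
      δ (coordProj K A) = 0 := by
    intro A l hl hA
    have hA' := hrank A hl hA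
    have hsq := hδ _ _ hA' hA'
    rw [coordProj_mul_coordProj, Finset.union_idempotent] at hsq
    have hi : ∀ i, ∃ j ≤ m, (coordProj K {i} : Matrix (Fin n) (Fin n) K).rank = n + 1 - 2 ^ j :=
      fun i => hrank {i} hm1 (by simp)
    have hrow : ∀ i ∈ A, δ (coordProj K A) = coordProj K {i} * δ (coordProj K A) := by
      intro i hiA
      have h := hδ _ _ (hi i) hA'
      rwa [coordProj_mul_coordProj, h1, zero_mul, zero_add,
        Finset.union_eq_right.2 (Finset.singleton_subset_iff.2 hiA)] at h
    ext a b
    have hab := congrFun (congrFun hsq a) b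
    rw [Matrix.add_apply, mul_coordProj_apply, coordProj_mul_apply] at hab
    by_cases ha : a ∈ A
    · rw [hrow a ha, coordProj_mul_apply]; simp
    · have hcol : b ∈ A → δ (coordProj K A) a b = 0 := by
        intro hb
        have h := hδ _ _ hA' (hi b)
        rw [coordProj_mul_coordProj, h1, mul_zero, add_zero,
          Finset.union_eq_left.2 (Finset.singleton_subset_iff.2 hb)] at h
        rw [h, mul_coordProj_apply]; simp
      by_cases hb : b ∈ A
      · exact hcol hb
      · simpa [ha, hb] using hab
  have h0 : ∀ A : Finset (Fin n), δ (coordProj K A) = 0 := by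
    intro A
    obtain ⟨l, hl, B, C, rfl, hB, hC⟩ := hsplit A
    rw [← coordProj_mul_coordProj, hδ _ _ (hrank B hl hB) (hrank C hl hC), h0list B hl hB,
      h0list C hl hC]
    simp
  -- every matrix is a product of two matrices of the given ranks
  have hfac : ∀ x : Matrix (Fin n) (Fin n) K, ∃ l ≤ m, ∃ a b : Matrix (Fin n) (Fin n) K,
      x = a * b ∧ a.rank = n + 1 - 2 ^ l ∧ b.rank = n + 1 - 2 ^ l := by
    intro x
    obtain ⟨g, h, A, hg, hh, rfl⟩ := exists_eq_unit_mul_coordProj_mul_unit x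
    obtain ⟨l, hl, B, C, rfl, hB, hC⟩ := hsplit A
    refine ⟨l, hl, g * coordProj K B, coordProj K C * h, ?_, ?_, ?_⟩
    · rw [← coordProj_mul_coordProj]; simp only [mul_assoc]
    · rw [rank_mul_eq_right_of_isUnit_det _ _ ((isUnit_iff_isUnit_det g).1 hg), rank_coordProj]
      omega
    · rw [rank_mul_eq_left_of_isUnit_det _ _ ((isUnit_iff_isUnit_det h).1 hh), rank_coordProj]
      omega
  have hleib : ∀ x y : Matrix (Fin n) (Fin n) K, δ (x * y) = δ x * y + x * δ y := by
    refine leibniz_of_isUnit (fun g x hg => ?_) (fun x g hg => ?_) h0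
    · obtain ⟨l, hl, a, b, rfl, ha, hb⟩ := hfac x
      have hga : (g * a).rank = n + 1 - 2 ^ l := by
        rw [rank_mul_eq_right_of_isUnit_det _ _ ((isUnit_iff_isUnit_det g).1 hg), ha]
      rw [← mul_assoc, hδ _ _ ⟨l, hl, hga⟩ ⟨l, hl, hb⟩, hδ _ _ (hunit g hg) ⟨l, hl, ha⟩,
        hδ _ _ ⟨l, hl, ha⟩ ⟨l, hl, hb⟩]
      simp only [mul_add, add_mul, mul_assoc, add_assoc]
    · obtain ⟨l, hl, a, b, rfl, ha, hb⟩ := hfac x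
      have hbg : (b * g).rank = n + 1 - 2 ^ l := by
        rw [rank_mul_eq_left_of_isUnit_det _ _ ((isUnit_iff_isUnit_det g).1 hg), hb]
      rw [mul_assoc, hδ _ _ ⟨l, hl, ha⟩ ⟨l, hl, hbg⟩, hδ _ _ ⟨l, hl, hb⟩ (hunit g hg),
        hδ _ _ ⟨l, hl, ha⟩ ⟨l, hl, hb⟩]
      simp only [mul_add, add_mul, mul_assoc, add_assoc]
  exact ⟨map_add_of_leibniz hn hleib h0, hleib⟩

/-- If `δ` satisfies the Leibniz rule on the diagonal idempotents of corank one, it agrees there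
with an inner derivation. -/
theorem exists_commutator_eq_on_coordProj_singleton
    {δ : Matrix (Fin n) (Fin n) K → Matrix (Fin n) (Fin n) K}
    (hδ : ∀ i j, δ (coordProj K {i} * coordProj K {j}) =
      δ (coordProj K {i}) * coordProj K {j} + coordProj K {i} * δ (coordProj K {j})) :
    ∃ s, ∀ i, δ (coordProj K {i}) = coordProj K {i} * s - s * coordProj K {i} := by
  refine ⟨of fun a b => δ (coordProj K {b}) a b, fun j => ?_⟩
  ext a b
  rw [Matrix.sub_apply, mul_coordProj_apply, coordProj_mul_apply, of_apply]
  have hsq := congrFun (congrFun (hδ j j) a) b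
  rw [coordProj_mul_coordProj, Finset.union_idempotent, Matrix.add_apply, mul_coordProj_apply,
    coordProj_mul_apply] at hsq
  by_cases ha : a = j <;> by_cases hb : b = j
  · simpa [ha, hb] using hsq
  · have hcomm := (hδ j b).symm.trans
      ((congrArg δ (by rw [coordProj_mul_coordProj, coordProj_mul_coordProj,
        Finset.union_comm])).trans (hδ b j))
    have h := congrFun (congrFun hcomm j) b
    rw [Matrix.add_apply, Matrix.add_apply, mul_coordProj_apply, mul_coordProj_apply,
      coordProj_mul_apply, coordProj_mul_apply] at h
    have hjb : j ≠ b := Ne.symm hb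
    simp only [Finset.mem_singleton, if_true, hb, hjb, if_false, add_zero] at h
    simp only [ha, hb, Finset.mem_singleton, if_true, if_false, zero_sub]
    exact eq_neg_of_add_eq_zero_right h.symm
  · simp [ha, hb]
  · simpa [ha, hb] using hsq

end

theorem stmt_16 {n : ℕ} (K : Type*) [Field K]
    (hn : 2 ≤ n) (m : ℕ) (hm : (m : ℤ) = ⌈Real.logb 2 ((n : ℝ) / 2 + 1)⌉)
    (δ : Matrix (Fin n) (Fin n) K → Matrix (Fin n) (Fin n) K)
    (hδ : ∀ x y : Matrix (Fin n) (Fin n) K,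
      (∃ i ≤ m, x.rank = n + 1 - 2 ^ i) → (∃ i ≤ m, y.rank = n + 1 - 2 ^ i) →
      δ (x * y) = δ x * y + x * δ y) :
    (∀ x y : Matrix (Fin n) (Fin n) K, δ (x + y) = δ x + δ y) ∧
    (∀ x y : Matrix (Fin n) (Fin n) K, δ (x * y) = δ x * y + x * δ y) := by
  have hpow : n + 2 ≤ 2 ^ (m + 1) := by
    have hle : Real.logb 2 ((n : ℝ) / 2 + 1) ≤ (m : ℝ) := by
      have h := Int.le_ceil (Real.logb 2 ((n : ℝ) / 2 + 1))
      rw [← hm] at h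
      exact_mod_cast h
    rw [Real.logb_le_iff_le_rpow one_lt_two (by positivity), Real.rpow_natCast] at hle
    have h : (n : ℝ) + 2 ≤ 2 ^ (m + 1) := by rw [pow_succ]; linarith
    exact_mod_cast h
  have hm1 : 1 ≤ m := by
    rcases m with _ | m
    · norm_num at hpow; omega
    · omega
  have hrank : ∀ i : Fin n, ∃ l ≤ m, (coordProj K {i}).rank = n + 1 - 2 ^ l :=
    fun i => ⟨1, hm1, by rw [rank_coordProj, Finset.card_singleton]; omega⟩
  obtain ⟨s, hs⟩ := exists_commutator_eq_on_coordProj_singleton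
    fun i j => hδ _ _ (hrank i) (hrank j)
  obtain ⟨hadd, hmul⟩ := derivation_of_leibniz_of_coordProj_singleton hn hm1 hpow
    (δ := fun x => δ x - (x * s - s * x))
    (fun x y hx hy => by
      simp only [hδ x y hx hy]
      noncomm_ring)
    (fun i => by simp only [hs i, sub_self])
  constructor
  · intro x y
    have h := hadd x y
    simp only [sub_eq_iff_eq_add] at h
    rw [h]
    noncomm_ring
  · intro x y
    have h := hmul x y
    simp only [sub_eq_iff_eq_add] at h
    rw [h]
    noncomm_ring
end
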